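/- arXiv:1502.03222 — 6 statements merged into one kernel-verified Lean document; each statement's English description precedes it below -/
import Mathlib

section
/- Let A be a linear relation on a complex Banach space K and let M = [[α,β],[γ,δ]] ∈ ℂ^{2×2} be invertible. Let φ_M : ℂ ∪ {∞} → ℂ ∪ {∞} denote the Möbius transform z ↦ (αz + β)/(γz + δ), with the usual conventions φ_M(∞) = α/γ and φ_M(−δ/γ) = ∞ (and φ_M(∞) = ∞ if γ = 0). Then ρ(τ_M(A)) = φ_M(ρ(A)) and σ(τ_M(A)) = φ_M(σ(A)). -/
/-!
The points of `ℂ ∪ {∞}` are treated in homogeneous coordinates: `[p : q]` stands for `p / q`.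
The point `[p : q]` is in the resolvent set of `A` exactly when the map `A → K`,
`(x, y) ↦ q y - p x`, has a bounded everywhere defined inverse `S : K → K × K` (`HomResolvent`).
This condition is invariant under rescaling `(p, q)`, and for
`(x', y') = τ_M (x, y)`, `(p', q') = M (p, q)` one has `q' y' - p' x' = det M • (q y - p x)`.
Hence `[p : q]` is in the resolvent set of `A` iff `M [p : q]` is in that of `τ_M A`
(`homResolvent_map_iff`), that is, `ρ(A)` is the preimage of `ρ(τ_M A)` under `φ_M`. Both claims
follow because `φ_M` is surjective.
-/

/-- The transformation `τ_M` associated to the matrix `M = [[α,β],[γ,δ]]`,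
acting on `K × K` by `τ_M(x;y) = (δx + γy; βx + αy)`. -/
noncomputable def tauM (K : Type*) [AddCommGroup K] [Module ℂ K]
    (M : Matrix (Fin 2) (Fin 2) ℂ) : (K × K) →ₗ[ℂ] (K × K) :=
  LinearMap.prod
    (M 1 1 • LinearMap.fst ℂ K K + M 1 0 • LinearMap.snd ℂ K K)
    (M 0 1 • LinearMap.fst ℂ K K + M 0 0 • LinearMap.snd ℂ K K)

/-- The graph of an everywhere defined bounded operator, as a linear relation. -/
noncomputable def graphRel {K : Type*} [NormedAddCommGroup K] [NormedSpace ℂ K]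
    (B : K →L[ℂ] K) : Submodule ℂ (K × K) :=
  LinearMap.graph (B : K →ₗ[ℂ] K)

/-- For `z = some λ` this is the linear relation `(A - λ)⁻¹ = {(y - λx, x) : (x,y) ∈ A}`;
for `z = none` (i.e. `z = ∞`) it is `A` itself. -/
noncomputable def relResolventRel {K : Type*} [AddCommGroup K] [Module ℂ K]
    (A : Submodule ℂ (K × K)) : Option ℂ → Submodule ℂ (K × K)
  | none => A
  | some l => Submodule.map (tauM K ![![0, 1], ![1, -l]]) A

/-- The resolvent set of a linear relation `A`, as a subset of `ℂ ∪ {∞}`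
(encoded as `Option ℂ`, with `none` playing the role of `∞`). -/
noncomputable def relResolventSet {K : Type*} [NormedAddCommGroup K] [NormedSpace ℂ K]
    (A : Submodule ℂ (K × K)) : Set (Option ℂ) :=
  {z | ∃ B : K →L[ℂ] K, relResolventRel A z = graphRel B}

open scoped Classical in
/-- The Möbius transform `z ↦ (αz + β)/(γz + δ)` on `ℂ ∪ {∞}` associated to
`M = [[α,β],[γ,δ]]`, with the usual conventions at `∞` and at the pole. -/
noncomputable def mobius (M : Matrix (Fin 2) (Fin 2) ℂ) : Option ℂ → Option ℂ
  | none => if M 1 0 = 0 then none else some (M 0 0 / M 1 0)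
  | some z => if M 1 0 * z + M 1 1 = 0 then none
      else some ((M 0 0 * z + M 0 1) / (M 1 0 * z + M 1 1))

/-- The point with homogeneous coordinates `[p : q]` is a regular point of `A`: the map
`(x, y) ↦ q y - p x` from `A` to `K` has a bounded everywhere defined inverse `S`. -/
def HomResolvent {K : Type*} [NormedAddCommGroup K] [NormedSpace ℂ K]
    (A : Submodule ℂ (K × K)) (p q : ℂ) : Prop :=
  ∃ S : K →L[ℂ] K × K, (∀ k, S k ∈ A) ∧ (∀ k, q • (S k).2 - p • (S k).1 = k) ∧
    ∀ u ∈ A, S (q • u.2 - p • u.1) = u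

section

variable {K : Type*} [NormedAddCommGroup K] [NormedSpace ℂ K]

theorem tauM_apply (M : Matrix (Fin 2) (Fin 2) ℂ) (u : K × K) :
    tauM K M u = (M 1 1 • u.1 + M 1 0 • u.2, M 0 1 • u.1 + M 0 0 • u.2) := rfl

theorem mem_graphRel (B : K →L[ℂ] K) (u : K × K) : u ∈ graphRel B ↔ u.2 = B u.1 :=
  LinearMap.mem_graph_iff (B : K →ₗ[ℂ] K) u

theorem tauM_resolvent (l : ℂ) (u : K × K) :
    tauM K ![![0, 1], ![1, -l]] u = (u.2 - l • u.1, u.1) := by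
  change (-l • u.1 + (1 : ℂ) • u.2, (1 : ℂ) • u.1 + (0 : ℂ) • u.2) = _
  ext <;> module

theorem mem_resolventSet_none (A : Submodule ℂ (K × K)) :
    none ∈ relResolventSet A ↔ HomResolvent A 1 0 := by
  constructor
  · rintro ⟨B, hB⟩
    have hA : ∀ u : K × K, u ∈ A ↔ u.2 = B u.1 := fun u => by
      change A = graphRel B at hB
      rw [hB]
      exact mem_graphRel B _
    refine ⟨(-ContinuousLinearMap.id ℂ K).prod (-B), fun k => ?_, fun k => ?_, fun u hu => ?_⟩
    · simp [hA]
    · simp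
    · have := (hA u).1 hu
      ext <;> simp [this]
  · rintro ⟨S, h1, h2, h3⟩
    refine ⟨-(ContinuousLinearMap.snd ℂ K K).comp S, ?_⟩
    change A = graphRel _
    ext u
    refine Iff.trans ?_ (mem_graphRel _ _).symm
    constructor
    · intro hu
      have := congrArg Prod.snd (h3 u hu)
      simpa using this.symm
    · intro hu
      have e1 := h2 u.1
      have : u = -S u.1 := by
        ext
        · simpa using e1.symm
        · simpa using hu
      rw [this]
      exact A.neg_mem (h1 _)

theorem mem_resolventSet_some (A : Submodule ℂ (K × K)) (l : ℂ) :
    some l ∈ relResolventSet A ↔ HomResolvent A l 1 := by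
  have key : ∀ v : K × K, v ∈ relResolventRel A (some l) ↔ (v.2, v.1 + l • v.2) ∈ A := by
    intro v
    constructor
    · rintro ⟨u, hu, rfl⟩
      simpa [tauM_resolvent] using hu
    · intro h
      refine ⟨_, h, ?_⟩
      simp [tauM_resolvent]
  constructor
  · rintro ⟨B, hB⟩
    have hA : ∀ v : K × K, (v.2, v.1 + l • v.2) ∈ A ↔ v.2 = B v.1 := fun v => by
      rw [← key, hB]
      exact mem_graphRel B _
    refine ⟨B.prod (ContinuousLinearMap.id ℂ K + l • B), fun k => ?_, fun k => ?_,
      fun u hu => ?_⟩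
    · exact (hA (k, B k)).2 rfl
    · simp
    · have h : u.1 = B (u.2 - l • u.1) := (hA (u.2 - l • u.1, u.1)).1 (by simpa using hu)
      ext
      · simpa using h.symm
      · simp only [one_smul, ContinuousLinearMap.prod_apply, add_apply,
          smul_apply, ContinuousLinearMap.id_apply, ← h]
        abel
  · rintro ⟨S, h1, h2, h3⟩
    refine ⟨(ContinuousLinearMap.fst ℂ K K).comp S, ?_⟩
    ext v
    refine (key v).trans (Iff.trans ?_ (mem_graphRel _ _).symm)
    constructor
    · intro hv
      have := congrArg Prod.fst (h3 _ hv)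
      simpa using this.symm
    · intro hv
      have hv' : v.2 = (S v.1).1 := hv
      have e := h2 v.1
      rw [one_smul, sub_eq_iff_eq_add] at e
      rw [hv', ← e]
      exact h1 _

theorem HomResolvent.scale {A : Submodule ℂ (K × K)} {p q : ℂ} (h : HomResolvent A p q)
    {c : ℂ} (hc : c ≠ 0) : HomResolvent A (c * p) (c * q) := by
  obtain ⟨S, h1, h2, h3⟩ := h
  refine ⟨c⁻¹ • S, fun k => A.smul_mem _ (h1 k), fun k => ?_, fun u hu => ?_⟩
  · have e : (c * q) • ((c⁻¹ • S) k).2 - (c * p) • ((c⁻¹ • S) k).1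
        = q • (S k).2 - p • (S k).1 := by
      simp only [smul_apply, Prod.smul_fst, Prod.smul_snd, smul_smul]
      congr 2 <;> field_simp
    rw [e, h2]
  · have e : (c * q) • u.2 - (c * p) • u.1 = c • (q • u.2 - p • u.1) := by
      simp only [smul_sub, smul_smul]
    rw [e, smul_apply, map_smul, h3 u hu, inv_smul_smul₀ hc]

theorem homResolvent_scale_iff (A : Submodule ℂ (K × K)) {p q c : ℂ} (hc : c ≠ 0) :
    HomResolvent A (c * p) (c * q) ↔ HomResolvent A p q := by
  refine ⟨fun h => ?_, fun h => h.scale hc⟩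
  simpa [inv_mul_cancel_left₀ hc] using h.scale (inv_ne_zero hc)

/-- Regular points are carried along by `τ_M`; the inverse map becomes `(det M)⁻¹ • τ_M ∘ S`. -/
theorem HomResolvent.map {A : Submodule ℂ (K × K)} {p q : ℂ} (h : HomResolvent A p q)
    {M : Matrix (Fin 2) (Fin 2) ℂ} (hM : M.det ≠ 0) :
    HomResolvent (A.map (tauM K M)) (M 0 0 * p + M 0 1 * q) (M 1 0 * p + M 1 1 * q) := by
  obtain ⟨S, h1, h2, h3⟩ := h
  let T : K × K →L[ℂ] K × K := ⟨tauM K M, by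
    change Continuous fun u : K × K =>
      (M 1 1 • u.1 + M 1 0 • u.2, M 0 1 • u.1 + M 0 0 • u.2)
    fun_prop⟩
  have hT : ∀ u, T u = tauM K M u := fun _ => rfl
  have key : ∀ u : K × K, (M 1 0 * p + M 1 1 * q) • (tauM K M u).2
      - (M 0 0 * p + M 0 1 * q) • (tauM K M u).1 = M.det • (q • u.2 - p • u.1) := by
    intro u
    rw [tauM_apply, Matrix.det_fin_two]
    module
  refine ⟨M.det⁻¹ • T.comp S, fun k => ?_, fun k => ?_, ?_⟩
  · exact Submodule.smul_mem _ _ ⟨S k, h1 k, rfl⟩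
  · simp only [smul_apply, ContinuousLinearMap.comp_apply, hT,
      Prod.smul_fst, Prod.smul_snd]
    rw [smul_comm _ M.det⁻¹, smul_comm _ M.det⁻¹, ← smul_sub, key, h2, inv_smul_smul₀ hM]
  · rintro _ ⟨u, hu, rfl⟩
    rw [key, map_smul, smul_apply, ContinuousLinearMap.comp_apply, h3 u hu,
      smul_inv_smul₀ hM, hT]

theorem homResolvent_map_iff (A : Submodule ℂ (K × K)) {p q : ℂ}
    {M : Matrix (Fin 2) (Fin 2) ℂ} (hM : M.det ≠ 0) :
    HomResolvent (A.map (tauM K M)) (M 0 0 * p + M 0 1 * q) (M 1 0 * p + M 1 1 * q)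
      ↔ HomResolvent A p q := by
  refine ⟨fun h => ?_, fun h => h.map hM⟩
  -- The adjugate inverts `M` up to the factor `det M`, which affects neither `A` nor `[p : q]`.
  have hadj : M.adjugate.det ≠ 0 := by
    rw [Matrix.det_adjugate]
    exact pow_ne_zero _ hM
  have h' := h.map hadj
  have hu : ∀ u : K × K, tauM K M.adjugate (tauM K M u) = M.det • u := by
    intro u
    ext <;> simp only [tauM_apply, Matrix.adjugate_fin_two, Matrix.det_fin_two, Matrix.of_apply,
      Matrix.cons_val_zero, Matrix.cons_val_one, Prod.smul_fst, Prod.smul_snd] <;> module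
  have hA : (A.map (tauM K M)).map (tauM K M.adjugate) = A := by
    ext v
    constructor
    · rintro ⟨_, ⟨u, hu', rfl⟩, rfl⟩
      rw [hu]
      exact A.smul_mem _ hu'
    · intro hv
      refine ⟨_, ⟨M.det⁻¹ • v, A.smul_mem _ hv, rfl⟩, ?_⟩
      rw [hu, smul_inv_smul₀ hM]
  rw [hA] at h'
  rw [← homResolvent_scale_iff A hM]
  convert h' using 1 <;> simp only [Matrix.adjugate_fin_two, Matrix.det_fin_two, Matrix.of_apply,
      Matrix.cons_val_zero, Matrix.cons_val_one] <;> ring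

theorem mobius_mem_iff (A : Submodule ℂ (K × K)) {M : Matrix (Fin 2) (Fin 2) ℂ}
    (hM : M.det ≠ 0) (z : Option ℂ) :
    mobius M z ∈ relResolventSet (A.map (tauM K M)) ↔ z ∈ relResolventSet A := by
  have hd := hM
  rw [Matrix.det_fin_two] at hd
  cases z with
  | none =>
    rw [mem_resolventSet_none, ← homResolvent_map_iff A hM]
    simp only [mobius, mul_one, mul_zero, add_zero]
    split_ifs with h
    · have h0 : M 0 0 ≠ 0 := by
        rintro h0
        simp [h, h0] at hd
      rw [mem_resolventSet_none, ← homResolvent_scale_iff _ h0, h, mul_one, mul_zero]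
    · rw [mem_resolventSet_some, ← homResolvent_scale_iff _ h, mul_one, mul_div_cancel₀ _ h]
  | some z =>
    rw [mem_resolventSet_some, ← homResolvent_map_iff A hM]
    simp only [mobius, mul_one]
    split_ifs with h
    · have h0 : M 0 0 * z + M 0 1 ≠ 0 := by
        intro h0
        -- `(z, 1)` cannot lie in the kernel of `M`.
        have e0 : M 1 0 * (M 0 0 * z + M 0 1) = 0 := by rw [h0, mul_zero]
        have e1 : M 0 0 * (M 1 0 * z + M 1 1) = 0 := by rw [h, mul_zero]
        exact hd (by linear_combination e1 - e0)
      rw [mem_resolventSet_none, ← homResolvent_scale_iff _ h0, h, mul_one, mul_zero]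
    · rw [mem_resolventSet_some, ← homResolvent_scale_iff _ h, mul_one, mul_div_cancel₀ _ h]

end

theorem mobius_surjective {M : Matrix (Fin 2) (Fin 2) ℂ} (hM : M.det ≠ 0) :
    Function.Surjective (mobius M) := by
  rw [Matrix.det_fin_two] at hM
  intro w
  cases w with
  | none =>
    by_cases h : M 1 0 = 0
    · exact ⟨none, by simp [mobius, h]⟩
    · refine ⟨some (-M 1 1 / M 1 0), ?_⟩
      have : M 1 0 * (-M 1 1 / M 1 0) + M 1 1 = 0 := by field_simp; ring
      simp [mobius, this]
  | some w =>
    by_cases h : M 0 0 - w * M 1 0 = 0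
    · have hc : M 1 0 ≠ 0 := by
        intro hc
        have ha : M 0 0 = 0 := by simpa [hc] using h
        simp [hc, ha] at hM
      refine ⟨none, ?_⟩
      have : M 0 0 / M 1 0 = w := by
        rw [div_eq_iff hc]
        linear_combination h
      simp [mobius, hc, this]
    · -- The solution `z` of `αz + β = w (γz + δ)`.
      refine ⟨some ((w * M 1 1 - M 0 1) / (M 0 0 - w * M 1 0)), ?_⟩
      have e : M 1 0 * ((w * M 1 1 - M 0 1) / (M 0 0 - w * M 1 0)) + M 1 1
          = (M 0 0 * M 1 1 - M 0 1 * M 1 0) / (M 0 0 - w * M 1 0) := by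
        rw [eq_div_iff h, add_mul, mul_assoc, div_mul_cancel₀ _ h]
        ring
      have hne := div_ne_zero hM h
      rw [← e] at hne
      simp only [mobius, if_neg hne]
      congr 1
      rw [div_eq_iff hne]
      field_simp
      ring

theorem stmt1 {K : Type*} [NormedAddCommGroup K] [NormedSpace ℂ K] [CompleteSpace K]
    (A : Submodule ℂ (K × K)) (M : Matrix (Fin 2) (Fin 2) ℂ) (hM : IsUnit M) :
    relResolventSet (Submodule.map (tauM K M) A) = mobius M '' relResolventSet A ∧
    Set.univ \ relResolventSet (Submodule.map (tauM K M) A)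
      = mobius M '' (Set.univ \ relResolventSet A) := by
  have hdet : M.det ≠ 0 := ((Matrix.isUnit_iff_isUnit_det M).1 hM).ne_zero
  have hpre : relResolventSet A
      = mobius M ⁻¹' relResolventSet (Submodule.map (tauM K M) A) :=
    Set.ext fun z => (mobius_mem_iff A hdet z).symm
  have hs := mobius_surjective hdet
  constructor
  · rw [hpre, Set.image_preimage_eq _ hs]
  · rw [hpre, ← Set.preimage_univ (f := mobius M), ← Set.preimage_sdiff,
      Set.image_preimage_eq _ hs, Set.preimage_univ]
end

section
/- Let T : V → K be a linear map between vector spaces and let A be a linear relation on K. Then dom((T×T)⁻¹(A)) ⊆ T⁻¹(dom A). If additionally ran(A − μ) ⊆ ran T for some μ ∈ ℂ, where A − μ := {(x, y − μx) : (x,y) ∈ A} and ran(A − μ) := {y − μx : (x,y) ∈ A}, then dom((T×T)⁻¹(A)) = T⁻¹(dom A). -/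
theorem stmt7 {V K : Type*} [AddCommGroup V] [Module ℂ V] [AddCommGroup K] [Module ℂ K]
    (T : V →ₗ[ℂ] K) (A : Submodule ℂ (K × K)) :
    ({x : V | ∃ y, (x, y) ∈ Submodule.comap (T.prodMap T) A}
        ⊆ ⇑T ⁻¹' {x : K | ∃ y, (x, y) ∈ A}) ∧
    (∀ μ : ℂ, {z : K | ∃ x y, (x, y) ∈ A ∧ z = y - μ • x} ⊆ Set.range T →
      {x : V | ∃ y, (x, y) ∈ Submodule.comap (T.prodMap T) A}
        = ⇑T ⁻¹' {x : K | ∃ y, (x, y) ∈ A}) := by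
  have hsub : {x : V | ∃ y, (x, y) ∈ Submodule.comap (T.prodMap T) A}
      ⊆ ⇑T ⁻¹' {x : K | ∃ y, (x, y) ∈ A} := by
    rintro x ⟨y, hy⟩
    exact ⟨T y, hy⟩
  refine ⟨hsub, fun μ hμ => hsub.antisymm ?_⟩
  rintro x ⟨y, hy⟩
  obtain ⟨v, hv⟩ := hμ ⟨T x, y, hy, rfl⟩
  -- From `T v = y - μ • T x` it follows that `y = T (v + μ • x)` lies in the range of `T`.
  refine ⟨v + μ • x, ?_⟩
  have hy' : T (v + μ • x) = y := by
    rw [map_add, map_smul, hv, sub_add_cancel]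
  simpa only [Submodule.mem_comap, LinearMap.prodMap_apply, hy'] using hy
end

section
/- Let (K, ⟨·,·⟩, G) be a Krein space, let (V, ⟨·,·⟩) be a complex Hilbert space, let T : V → K be a bounded injective linear operator with Krein adjoint T⁺ = T*G, and let A be an everywhere-defined bounded linear operator on K whose graph satisfies (TT⁺ × TT⁺)(graph A⁺) ⊆ graph A, where A⁺ := G⁻¹A*G. Then (T×T)⁻¹(graph A) is the graph of an everywhere-defined bounded self-adjoint linear operator B on V with ‖B‖ ≤ ‖A‖, where ‖A‖ is the operator norm of A with respect to the Hilbert space norm of K. -/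
/-!
Since `G` is invertible, it cancels from the hypothesis, which becomes
`T T* A* = A T T*` (`comp_eq_of_krein_inclusion`). The operator `B` is defined on the range of `T*`,
which is dense because `T` is injective, by `B (T* y) = T* (A* y)`.

The heart of the matter is the estimate `‖T* A* y‖ ≤ ‖A‖ ‖T* y‖` (`norm_adjoint_apply_le`), a form
of the Krein–Reid inequality: the intertwining relation and Cauchy–Schwarz make the sequence
`aₙ = ‖T* (A*)ⁿ y‖` log-convex, and `aₙ ≤ ‖T*‖ ‖y‖ ‖A‖ⁿ`; a log-convex sequence growing no faster
than `Mⁿ` satisfies `a₁ ≤ M a₀` (`apply_one_le_of_logConvex`).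

Thus `B` extends to all of `V` with `‖B‖ ≤ ‖A‖`. From `T B T* = T T* A* = A T T*` and density,
`T B = A T`; the adjoint of `B T* = T* A*` reads `T B* = A T`. Injectivity of `T` gives `B = B*`,
and also that `T v = A T u` is equivalent to `v = B u`.
-/

open ContinuousLinearMap

/-- If `a₁ > M a₀`, log-convexity forces growth at least like `(a₁ / a₀)ⁿ`, which outruns
`C Mⁿ`. -/
lemma apply_one_le_of_logConvex {a : ℕ → ℝ} {C M : ℝ} (hM : 0 ≤ M) (ha : ∀ n, 0 ≤ a n)
    (hlog : ∀ n, a (n + 1) ^ 2 ≤ a n * a (n + 2)) (hbd : ∀ n, a n ≤ C * M ^ n) :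
    a 1 ≤ M * a 0 := by
  by_contra! hlt
  have h1 : 0 < a 1 := lt_of_le_of_lt (mul_nonneg hM (ha 0)) hlt
  have h0 : 0 < a 0 := by
    refine lt_of_le_of_ne (ha 0) fun h => ?_
    have := hlog 0
    rw [← h] at this
    simp only [zero_add, zero_mul] at this
    nlinarith
  have hratio : ∀ n, 0 < a n ∧ a 1 * a n ≤ a 0 * a (n + 1) := by
    intro n
    induction n with
    | zero => exact ⟨h0, (mul_comm _ _).le⟩
    | succ n ih =>
      obtain ⟨hn, hr⟩ := ih
      have hn1 : 0 < a (n + 1) := pos_of_mul_pos_right ((mul_pos h1 hn).trans_le hr) h0.le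
      refine ⟨hn1, le_of_mul_le_mul_right ?_ hn1⟩
      calc a 1 * a (n + 1) * a (n + 1) = a 1 * a (n + 1) ^ 2 := by ring
        _ ≤ a 1 * (a n * a (n + 2)) := mul_le_mul_of_nonneg_left (hlog n) h1.le
        _ = a 1 * a n * a (n + 2) := by ring
        _ ≤ a 0 * a (n + 1) * a (n + 2) := mul_le_mul_of_nonneg_right hr (ha _)
        _ = a 0 * a (n + 1 + 1) * a (n + 1) := by ring
  have hpow : ∀ n, a 1 ^ n * a 0 ≤ a 0 ^ n * a n := by
    intro n
    induction n with
    | zero => simp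
    | succ n ih =>
      calc a 1 ^ (n + 1) * a 0 = a 1 * (a 1 ^ n * a 0) := by ring
        _ ≤ a 1 * (a 0 ^ n * a n) := mul_le_mul_of_nonneg_left ih h1.le
        _ = a 0 ^ n * (a 1 * a n) := by ring
        _ ≤ a 0 ^ n * (a 0 * a (n + 1)) :=
          mul_le_mul_of_nonneg_left (hratio n).2 (pow_nonneg h0.le n)
        _ = a 0 ^ (n + 1) * a (n + 1) := by ring
  have hle : ∀ n : ℕ, a 0 ≤ C * (M * a 0 / a 1) ^ n := by
    intro n
    have h := (hpow n).trans (mul_le_mul_of_nonneg_left (hbd n) (pow_nonneg h0.le n))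
    have hp : 0 < a 1 ^ n := pow_pos h1 n
    rw [div_pow, mul_pow, ← mul_div_assoc, le_div_iff₀ hp]
    linarith
  have hlim : Filter.Tendsto (fun n : ℕ => C * (M * a 0 / a 1) ^ n) Filter.atTop (nhds (C * 0)) :=
    (tendsto_pow_atTop_nhds_zero_of_lt_one (div_nonneg (mul_nonneg hM h0.le) h1.le)
      ((div_lt_one h1).2 hlt)).const_mul C
  have := ge_of_tendsto' hlim hle
  linarith

lemma exists_extension {K V : Type*} [NormedAddCommGroup K] [NormedSpace ℂ K]
    [NormedAddCommGroup V] [NormedSpace ℂ V] [CompleteSpace V]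
    {e : K →L[ℂ] V} (hd : DenseRange e) (f : K →L[ℂ] V) {C : ℝ} (hC : 0 ≤ C)
    (hb : ∀ y, ‖f y‖ ≤ C * ‖e y‖) :
    ∃ B : V →L[ℂ] V, (∀ y, B (e y) = f y) ∧ ‖B‖ ≤ C :=
  ⟨(f : K →ₗ[ℂ] V).extendOfNorm (e : K →ₗ[ℂ] V),
    LinearMap.extendOfNorm_eq (f := (f : K →ₗ[ℂ] V)) (e := (e : K →ₗ[ℂ] V)) hd ⟨C, hb⟩,
    LinearMap.opNorm_extendOfNorm_le (f := (f : K →ₗ[ℂ] V)) (e := (e : K →ₗ[ℂ] V)) hd hC hb⟩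

section

variable {K V : Type*}
  [NormedAddCommGroup K] [InnerProductSpace ℂ K] [CompleteSpace K]
  [NormedAddCommGroup V] [InnerProductSpace ℂ V] [CompleteSpace V]

/-- The Gram operator cancels: the inclusion of relations only says that `A` and `A*` are
intertwined by `T T*`. -/
lemma comp_eq_of_krein_inclusion
    {G Ginv : K →L[ℂ] K} (hG1 : G ∘L Ginv = 1) {T : V →L[ℂ] K} {A : K →L[ℂ] K}
    (hinv : Prod.map ⇑(T ∘L (adjoint T ∘L G)) ⇑(T ∘L (adjoint T ∘L G)) ''
      {p : K × K | p.2 = (Ginv ∘L (adjoint A ∘L G)) p.1} ⊆ {p : K × K | p.2 = A p.1}) (y : K) :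
    T (adjoint T (adjoint A y)) = A (T (adjoint T y)) := by
  have hGG : ∀ z, G (Ginv z) = z := fun z => by simpa using DFunLike.congr_fun hG1 z
  have h := hinv ⟨(Ginv y, (Ginv ∘L (adjoint A ∘L G)) (Ginv y)), rfl, rfl⟩
  simpa [hGG] using h

/-- A form of the Krein–Reid inequality for an operator symmetrized by `T T*`. -/
lemma norm_adjoint_apply_le {T : V →L[ℂ] K} {A : K →L[ℂ] K}
    (h : ∀ y, T (adjoint T (adjoint A y)) = A (T (adjoint T y))) (y : K) :
    ‖adjoint T (adjoint A y)‖ ≤ ‖A‖ * ‖adjoint T y‖ := by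
  have key := apply_one_le_of_logConvex (a := fun n => ‖adjoint T ((⇑(adjoint A))^[n] y)‖)
    (C := ‖adjoint T‖ * ‖y‖) (M := ‖A‖) (norm_nonneg _) (fun _ => norm_nonneg _) ?_ ?_
  · simpa using key
  · intro n
    simp only [Function.iterate_succ_apply']
    set z := (⇑(adjoint A))^[n] y
    have hz : inner ℂ (adjoint T (adjoint A z)) (adjoint T (adjoint A z))
        = inner ℂ (adjoint T z) (adjoint T (adjoint A (adjoint A z))) := by
      rw [adjoint_inner_left, adjoint_inner_left, adjoint_inner_left, h (adjoint A z)]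
    calc ‖adjoint T (adjoint A z)‖ ^ 2
        = ‖inner ℂ (adjoint T (adjoint A z)) (adjoint T (adjoint A z))‖ := by
          rw [inner_self_eq_norm_sq_to_K]; simp
      _ ≤ _ := by rw [hz]; exact norm_inner_le_norm _ _
  · intro n
    have hn : ‖(⇑(adjoint A))^[n] y‖ ≤ ‖A‖ ^ n * ‖y‖ := by
      induction n with
      | zero => simp
      | succ n ih =>
        rw [Function.iterate_succ_apply', pow_succ', mul_assoc]
        refine ((adjoint A).le_opNorm _).trans ?_
        rw [LinearIsometryEquiv.norm_map]
        exact mul_le_mul_of_nonneg_left ih (norm_nonneg _)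
    calc ‖adjoint T ((⇑(adjoint A))^[n] y)‖ ≤ ‖adjoint T‖ * ‖(⇑(adjoint A))^[n] y‖ :=
          (adjoint T).le_opNorm _
      _ ≤ ‖adjoint T‖ * (‖A‖ ^ n * ‖y‖) := mul_le_mul_of_nonneg_left hn (norm_nonneg _)
      _ = _ := by ring

lemma denseRange_adjoint_of_injective {T : V →L[ℂ] K} (hT : Function.Injective T) :
    DenseRange (adjoint T) := by
  have h : (adjoint T).range.topologicalClosure = ⊤ := by
    rw [← T.orthogonal_ker, LinearMap.ker_eq_bot.2 hT, Submodule.bot_orthogonal_eq_top]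
  exact Submodule.dense_iff_topologicalClosure_eq_top.2 h

lemma exists_isSelfAdjoint_intertwining {T : V →L[ℂ] K} (hT : Function.Injective T)
    {A : K →L[ℂ] K} (h : ∀ y, T (adjoint T (adjoint A y)) = A (T (adjoint T y))) :
    ∃ B : V →L[ℂ] V, (∀ u, T (B u) = A (T u)) ∧ IsSelfAdjoint B ∧ ‖B‖ ≤ ‖A‖ := by
  have hd := denseRange_adjoint_of_injective hT
  obtain ⟨B, hB, hBn⟩ := exists_extension hd (adjoint T ∘L adjoint A) (norm_nonneg A)
    (fun y => by rw [ContinuousLinearMap.comp_apply]; exact norm_adjoint_apply_le h y)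
  have hTB : ∀ u, T (B u) = A (T u) := by
    have heq : (fun u => T (B u)) = fun u => A (T u) := by
      refine hd.equalizer (by fun_prop) (by fun_prop) (funext fun y => ?_)
      simp only [Function.comp_apply, hB, ContinuousLinearMap.comp_apply, h]
    exact fun u => congrFun heq u
  have hTB' : ∀ u, T (adjoint B u) = A (T u) := by
    intro u
    refine ext_inner_right ℂ fun y => ?_
    rw [← adjoint_inner_right, adjoint_inner_left, hB, ContinuousLinearMap.comp_apply,
      adjoint_inner_right, adjoint_inner_right]
  refine ⟨B, hTB, ?_, hBn⟩
  rw [isSelfAdjoint_iff']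
  ext u
  exact hT ((hTB' u).trans (hTB u).symm)

end

theorem stmt12 {K V : Type*}
    [NormedAddCommGroup K] [InnerProductSpace ℂ K] [CompleteSpace K]
    [NormedAddCommGroup V] [InnerProductSpace ℂ V] [CompleteSpace V]
    (G Ginv : K →L[ℂ] K) (hG : IsSelfAdjoint G)
    (hG1 : G ∘L Ginv = 1) (hG2 : Ginv ∘L G = 1)
    (T : V →L[ℂ] K) (hT : Function.Injective T)
    (Tplus : K →L[ℂ] V) (hTplus : Tplus = adjoint T ∘L G)
    (A Aplus : K →L[ℂ] K) (hAplus : Aplus = Ginv ∘L (adjoint A ∘L G))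
    (hinv : Prod.map ⇑(T ∘L Tplus) ⇑(T ∘L Tplus) '' {p : K × K | p.2 = Aplus p.1}
      ⊆ {p : K × K | p.2 = A p.1}) :
    ∃ B : V →L[ℂ] V,
      (Prod.map ⇑T ⇑T ⁻¹' {p : K × K | p.2 = A p.1} = {p : V × V | p.2 = B p.1}) ∧
      IsSelfAdjoint B ∧ ‖B‖ ≤ ‖A‖ := by
  subst hTplus hAplus
  obtain ⟨B, hTB, hBsa, hBn⟩ :=
    exists_isSelfAdjoint_intertwining hT (comp_eq_of_krein_inclusion hG1 hinv)
  refine ⟨B, ?_, hBsa, hBn⟩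
  ext ⟨u, v⟩
  simp only [Set.mem_preimage, Set.mem_ofPred_eq, Prod.map_apply, ← hTB, hT.eq_iff]
end

section
/- Let (K, ⟨·,·⟩, G) be a Krein space, (V, ⟨·,·⟩) a complex Hilbert space, and T : V → K a bounded injective linear operator with Krein adjoint T⁺ = T*G. For every everywhere-defined bounded linear operator C on K commuting with TT⁺, the relation (T×T)⁻¹(graph C) is the graph of a unique everywhere-defined bounded linear operator Θ(C) on V; Θ(C) commutes with T⁺T, satisfies the intertwining relation T⁺C = Θ(C)T⁺, the set {(T⁺x, T⁺Cx) : x ∈ K} is dense in graph Θ(C), and ‖Θ(C)‖² ≤ ‖G⁻¹‖·‖G‖·‖C‖². -/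
/-!
Write `P = T⁺ = T* G` and `S = G⁻¹ C* G C`. Since `C` commutes with `T P`,
`⟨P C x, P C y⟩ = ⟨T P C x, G C y⟩ = ⟨C T P x, G C y⟩ = ⟨P x, P S y⟩`,
so `S` is symmetric for the positive semidefinite form `⟨P ·, P ·⟩`. By the Krein–Lax argument
(`norm_map_le_of_symmetric`) such an operator is bounded for the seminorm `‖P ·‖` with constant
`‖S‖`, hence `‖P C x‖² ≤ ‖P x‖ ‖P S x‖ ≤ ‖S‖ ‖P x‖²`, where
`‖S‖ ≤ ‖G⁻¹‖ ‖G‖ ‖C‖²`. Because `T` is injective and `G` is onto, `P` has dense range, and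
`P x ↦ P C x` extends to a bounded operator `B` on `V` with the required norm bound. On the
dense range of `P`, `T B P = T P C = C T P`, so `T B = C T`; together with injectivity of `T`
this identifies the graph of `B`, and the other claims follow.
-/

open ContinuousLinearMap

/-- A nonnegative log-convex sequence of growth `O(sⁿ)` satisfies `a 1 ≤ s * a 0`: otherwise the
ratio `r = a 1 / a 0 > s` would force the growth `a n ≥ rⁿ * a 0`. -/
lemma le_mul_of_logConvex (a : ℕ → ℝ) (c s : ℝ) (ha : ∀ n, 0 ≤ a n) (hs : 0 ≤ s)
    (hconv : ∀ n, a (n + 1) ^ 2 ≤ a n * a (n + 2)) (hb : ∀ n, a n ≤ c * s ^ n) :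
    a 1 ≤ s * a 0 := by
  by_contra! h
  have h0 : 0 < a 0 := by
    rcases (ha 0).eq_or_lt with h0 | h0
    · have h1 := hconv 0
      rw [← h0] at h1 h
      simp only [zero_add, zero_mul, mul_zero] at h1 h
      nlinarith
    · exact h0
  obtain ⟨r, hr⟩ : ∃ r, r = a 1 / a 0 := ⟨_, rfl⟩
  have hsr : s < r := by rw [hr, lt_div_iff₀ h0]; exact h
  have hr0 : 0 < r := hs.trans_lt hsr
  have hstep : ∀ n, 0 < a n ∧ r * a n ≤ a (n + 1) := by
    intro n
    induction n with
    | zero => exact ⟨h0, by rw [hr]; field_simp; simp⟩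
    | succ n ih =>
      obtain ⟨hn, hle⟩ := ih
      have hn1 : 0 < a (n + 1) := (mul_pos hr0 hn).trans_le hle
      refine ⟨hn1, ?_⟩
      have h2 := hconv n
      have h3 : a n * (r * a (n + 1)) ≤ a n * a (n + 2) := by nlinarith
      exact le_of_mul_le_mul_left h3 hn
  have hgrow : ∀ n, r ^ n * a 0 ≤ a n := by
    intro n
    induction n with
    | zero => simp
    | succ n ih =>
      calc r ^ (n + 1) * a 0 = r * (r ^ n * a 0) := by ring
        _ ≤ r * a n := by gcongr
        _ ≤ a (n + 1) := (hstep n).2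
  have hle : ∀ n, a 0 ≤ c * (s / r) ^ n := by
    intro n
    rw [div_pow, ← mul_div_assoc, le_div_iff₀ (by positivity), mul_comm]
    exact (hgrow n).trans (hb n)
  have hlim := (tendsto_pow_atTop_nhds_zero_of_lt_one (r := s / r) (by positivity)
    ((div_lt_one hr0).2 hsr)).const_mul c
  rw [mul_zero] at hlim
  exact absurd (ge_of_tendsto' hlim hle) (not_le.2 h0)

/-- The Krein–Lax estimate: an operator that is symmetric for the semi-inner product
`⟨P ·, P ·⟩` is bounded for the seminorm `‖P ·‖`, with the original operator norm as constant.
The sequence `‖P Sⁿ x‖` is log-convex by Cauchy–Schwarz. -/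
lemma norm_map_le_of_symmetric {K V : Type*}
    [NormedAddCommGroup K] [InnerProductSpace ℂ K]
    [NormedAddCommGroup V] [InnerProductSpace ℂ V]
    (P : K →L[ℂ] V) (S : K →L[ℂ] K)
    (h : ∀ x y, inner ℂ (P (S x)) (P y) = inner ℂ (P x) (P (S y))) (x : K) :
    ‖P (S x)‖ ≤ ‖S‖ * ‖P x‖ := by
  have key := le_mul_of_logConvex (fun n => ‖P ((S ^ n) x)‖) (‖P‖ * ‖x‖) ‖S‖
    (fun n => norm_nonneg _) (norm_nonneg _) ?_ ?_
  · simpa using key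
  · intro n
    have h1 : ∀ m, (S ^ (m + 1)) x = S ((S ^ m) x) := by
      intro m
      rw [pow_succ']
      rfl
    have h2 := h ((S ^ n) x) ((S ^ (n + 1)) x)
    rw [← h1, ← h1, inner_self_eq_norm_sq_to_K] at h2
    have h3 := norm_inner_le_norm (𝕜 := ℂ) (P ((S ^ n) x)) (P ((S ^ (n + 2)) x))
    rw [← h2] at h3
    simpa using h3
  · intro n
    have hpow : ‖(S ^ n) x‖ ≤ ‖S‖ ^ n * ‖x‖ := by
      induction n with
      | zero => simp
      | succ n ih =>
        rw [pow_succ']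
        calc ‖S ((S ^ n) x)‖ ≤ ‖S‖ * ‖(S ^ n) x‖ := S.le_opNorm _
          _ ≤ ‖S‖ * (‖S‖ ^ n * ‖x‖) := by gcongr
          _ = ‖S‖ ^ (n + 1) * ‖x‖ := by ring
    calc ‖P ((S ^ n) x)‖ ≤ ‖P‖ * ‖(S ^ n) x‖ := P.le_opNorm _
      _ ≤ ‖P‖ * (‖S‖ ^ n * ‖x‖) := by gcongr
      _ = ‖P‖ * ‖x‖ * ‖S‖ ^ n := by ring

theorem stmt13 {K V : Type*}
    [NormedAddCommGroup K] [InnerProductSpace ℂ K] [CompleteSpace K]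
    [NormedAddCommGroup V] [InnerProductSpace ℂ V] [CompleteSpace V]
    (G Ginv : K →L[ℂ] K) (hG : IsSelfAdjoint G)
    (hG1 : G ∘L Ginv = 1) (hG2 : Ginv ∘L G = 1)
    (T : V →L[ℂ] K) (hT : Function.Injective T)
    (Tplus : K →L[ℂ] V) (hTplus : Tplus = adjoint T ∘L G)
    (C : K →L[ℂ] K) (hC : C ∘L (T ∘L Tplus) = (T ∘L Tplus) ∘L C) :
    ∃ B : V →L[ℂ] V,
      (Prod.map ⇑T ⇑T ⁻¹' {p : K × K | p.2 = C p.1} = {p : V × V | p.2 = B p.1}) ∧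
      (∀ B' : V →L[ℂ] V,
        Prod.map ⇑T ⇑T ⁻¹' {p : K × K | p.2 = C p.1} = {p : V × V | p.2 = B' p.1} → B' = B) ∧
      B ∘L (Tplus ∘L T) = (Tplus ∘L T) ∘L B ∧
      B ∘L Tplus = Tplus ∘L C ∧
      (Set.range (fun x : K => (Tplus x, Tplus (C x))) ⊆ {p : V × V | p.2 = B p.1} ∧
        {p : V × V | p.2 = B p.1}
          ⊆ closure (Set.range fun x : K => (Tplus x, Tplus (C x)))) ∧
      ‖B‖ ^ 2 ≤ ‖Ginv‖ * ‖G‖ * ‖C‖ ^ 2 := by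
  have hGG : ∀ x, G (Ginv x) = x := fun x => DFunLike.congr_fun hG1 x
  have hCT : ∀ x, C (T (Tplus x)) = T (Tplus (C x)) := fun x => DFunLike.congr_fun hC x
  have hP : ∀ x, Tplus x = adjoint T (G x) := fun x => by rw [hTplus]; rfl
  -- The range of `T⁺` equals that of `T*`, whose orthogonal complement is `ker T = 0`.
  have hdense : DenseRange Tplus := by
    have hker : (LinearMap.range (Tplus : K →ₗ[ℂ] V))ᗮ = ⊥ := by
      rw [Submodule.eq_bot_iff]
      intro v hv
      rw [Submodule.mem_orthogonal] at hv
      apply hT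
      rw [map_zero, ← inner_self_eq_zero (𝕜 := ℂ)]
      have h := hv (Tplus (Ginv (T v))) ⟨_, rfl⟩
      rwa [hP, hGG, adjoint_inner_left] at h
    have htop := Submodule.topologicalClosure_eq_top_iff.2 hker
    have hd := Submodule.dense_iff_topologicalClosure_eq_top.2 htop
    rwa [LinearMap.coe_range] at hd
  obtain ⟨S, hS⟩ : ∃ S : K →L[ℂ] K, S = Ginv ∘L (adjoint C ∘L (G ∘L C)) := ⟨_, rfl⟩
  have hform : ∀ x y, inner ℂ (Tplus (C x)) (Tplus (C y)) = inner ℂ (Tplus x) (Tplus (S y)) := by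
    intro x y
    have hSy : G (S y) = adjoint C (G (C y)) := by rw [hS]; exact hGG _
    rw [hP (C y), hP (S y), adjoint_inner_right, adjoint_inner_right, hSy, adjoint_inner_right,
      hCT]
  have hsymm : ∀ x y, inner ℂ (Tplus (S x)) (Tplus y) = inner ℂ (Tplus x) (Tplus (S y)) := by
    intro x y
    rw [← hform, ← inner_conj_symm, ← hform, inner_conj_symm]
  have hSnorm : ‖S‖ ≤ ‖Ginv‖ * ‖G‖ * ‖C‖ ^ 2 := by
    rw [hS]
    calc ‖Ginv ∘L (adjoint C ∘L (G ∘L C))‖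
        ≤ ‖Ginv‖ * (‖adjoint C‖ * (‖G‖ * ‖C‖)) := by
          refine (opNorm_comp_le _ _).trans ?_
          gcongr
          refine (opNorm_comp_le _ _).trans ?_
          gcongr
          exact opNorm_comp_le _ _
      _ = ‖Ginv‖ * ‖G‖ * ‖C‖ ^ 2 := by
          rw [LinearIsometryEquiv.norm_map]
          ring
  have hbound : ∀ x, ‖Tplus (C x)‖ ≤ √‖S‖ * ‖Tplus x‖ := by
    intro x
    have h1 : ‖Tplus (C x)‖ ^ 2 ≤ ‖Tplus x‖ * ‖Tplus (S x)‖ := by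
      have h2 := norm_inner_le_norm (𝕜 := ℂ) (Tplus x) (Tplus (S x))
      rw [← hform, inner_self_eq_norm_sq_to_K] at h2
      simpa using h2
    have h3 := norm_map_le_of_symmetric Tplus S hsymm x
    refine abs_le_of_sq_le_sq' ?_ (by positivity) |>.2
    rw [mul_pow, Real.sq_sqrt (norm_nonneg _)]
    nlinarith [norm_nonneg (Tplus x)]
  obtain ⟨B, hBP, hBnorm⟩ : ∃ B : V →L[ℂ] V,
      (∀ x, B (Tplus x) = Tplus (C x)) ∧ ‖B‖ ≤ √‖S‖ :=
    ⟨((Tplus ∘L C : K →L[ℂ] V) : K →ₗ[ℂ] V).extendOfNorm (Tplus : K →ₗ[ℂ] V),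
      fun x => LinearMap.extendOfNorm_eq (f := ((Tplus ∘L C : K →L[ℂ] V) : K →ₗ[ℂ] V))
        (e := (Tplus : K →ₗ[ℂ] V)) hdense ⟨_, hbound⟩ x,
      LinearMap.opNorm_extendOfNorm_le (f := ((Tplus ∘L C : K →L[ℂ] V) : K →ₗ[ℂ] V))
        (e := (Tplus : K →ₗ[ℂ] V)) hdense (Real.sqrt_nonneg _) hbound⟩
  have hTB : ∀ u, T (B u) = C (T u) := by
    have h : (fun u => T (B u)) = fun u => C (T u) := by
      refine hdense.equalizer (by fun_prop) (by fun_prop) ?_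
      funext x
      simp only [Function.comp_apply]
      rw [hBP, hCT]
    exact congrFun h
  have hgraph : Prod.map ⇑T ⇑T ⁻¹' {p : K × K | p.2 = C p.1} = {p : V × V | p.2 = B p.1} := by
    ext ⟨u, v⟩
    simp only [Set.mem_preimage, Prod.map_apply, Set.mem_ofPred_eq]
    rw [← hTB]
    exact hT.eq_iff
  refine ⟨B, hgraph, ?_, ?_, ?_, ⟨?_, ?_⟩, ?_⟩
  · intro B' hB'
    ext u
    have hmem : (u, B u) ∈ {p : V × V | p.2 = B' p.1} := by
      rw [← hB', hgraph]
      rfl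
    exact hmem.symm
  · ext u
    change B (Tplus (T u)) = Tplus (T (B u))
    rw [hBP, hTB]
  · ext x
    exact hBP x
  · rintro _ ⟨x, rfl⟩
    exact (hBP x).symm
  · rintro ⟨u, v⟩ huv
    obtain rfl : v = B u := huv
    have hcont : Continuous fun u => (u, B u) := by fun_prop
    have hmem := image_closure_subset_closure_image hcont ⟨u, hdense u, rfl⟩
    rw [← Set.range_comp] at hmem
    convert hmem using 3
    funext x
    simp [hBP]
  · calc ‖B‖ ^ 2 ≤ √‖S‖ ^ 2 := by gcongr
      _ = ‖S‖ := Real.sq_sqrt (norm_nonneg _)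
      _ ≤ _ := hSnorm
end

section
/- Let (K, ⟨·,·⟩, G) be a Krein space, (V, ⟨·,·⟩) a complex Hilbert space, and T : V → K a bounded injective linear operator with Krein adjoint T⁺ = T*G. For C in the commutant (TT⁺)' ⊆ B(K), let Θ(C) ∈ B(V) be the unique bounded operator whose graph is (T×T)⁻¹(graph C). Then Θ : (TT⁺)' → (T⁺T)' is a *-algebra homomorphism: Θ is linear, Θ(C₁C₂) = Θ(C₁)Θ(C₂), Θ(C⁺) = Θ(C)* where C⁺ := G⁻¹C*G, Θ(I) = I, and Θ(TT⁺) = T⁺T. Moreover Θ(C) = 0 if and only if ran C ⊆ ker T⁺. -/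
/-!
Equality of graphs says exactly that `T ∘ Θ C = C ∘ T`, and since `T` is injective this
intertwining relation determines `Θ C`. Linearity, multiplicativity and the values at `1` and
`T T⁺` follow by cancelling `T` on the left.

Cancelling `T` in `T (Θ C) T⁺ = C T T⁺ = T T⁺ C` gives the second relation `(Θ C) T⁺ = T⁺ C`.
Operators on `V` are determined by their composition with `T⁺ = T* G` (`eq_of_comp_adjoint_comp`),
because `G` is invertible and `T` is injective. As `(Θ C)* T⁺ = (C T)* G = T⁺ C⁺ = Θ(C⁺) T⁺`, this
yields `Θ(C⁺) = (Θ C)*`; it also shows that `Θ C = 0` exactly when `T⁺ C = 0`.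
-/

open ContinuousLinearMap

/-- Right cancellation of `T* G`: the range of `T* G` is dense when `T` is injective and `G` has a
right inverse. The proof avoids density by taking adjoints and cancelling `T` on the left. -/
lemma eq_of_comp_adjoint_comp {K V : Type*}
    [NormedAddCommGroup K] [InnerProductSpace ℂ K] [CompleteSpace K]
    [NormedAddCommGroup V] [InnerProductSpace ℂ V] [CompleteSpace V]
    {G Ginv : K →L[ℂ] K} (hG1 : G ∘L Ginv = 1)
    {T : V →L[ℂ] K} (hT : Function.Injective T) {A B : V →L[ℂ] V}
    (h : A ∘L (adjoint T ∘L G) = B ∘L (adjoint T ∘L G)) : A = B := by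
  have h1 : A ∘L adjoint T = B ∘L adjoint T := by
    ext x
    have hx : G (Ginv x) = x := congr($hG1 x)
    simpa [hx] using congr($h (Ginv x))
  have h2 : T ∘L adjoint A = T ∘L adjoint B := by
    simpa [adjoint_comp] using congr(adjoint $h1)
  have h3 : adjoint A = adjoint B := by
    ext x
    exact hT congr($h2 x)
  exact adjoint.injective h3

theorem stmt14 {K V : Type*}
    [NormedAddCommGroup K] [InnerProductSpace ℂ K] [CompleteSpace K]
    [NormedAddCommGroup V] [InnerProductSpace ℂ V] [CompleteSpace V]
    (G Ginv : K →L[ℂ] K) (hG : IsSelfAdjoint G)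
    (hG1 : G ∘L Ginv = 1) (hG2 : Ginv ∘L G = 1)
    (T : V →L[ℂ] K) (hT : Function.Injective T)
    (Tplus : K →L[ℂ] V) (hTplus : Tplus = adjoint T ∘L G)
    (Θ : (K →L[ℂ] K) → (V →L[ℂ] V))
    (hΘ : ∀ C : K →L[ℂ] K, C ∘L (T ∘L Tplus) = (T ∘L Tplus) ∘L C →
      Prod.map ⇑T ⇑T ⁻¹' {p : K × K | p.2 = C p.1} = {p : V × V | p.2 = Θ C p.1}) :
    ∀ C C₁ C₂ : K →L[ℂ] K,
      C ∘L (T ∘L Tplus) = (T ∘L Tplus) ∘L C →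
      C₁ ∘L (T ∘L Tplus) = (T ∘L Tplus) ∘L C₁ →
      C₂ ∘L (T ∘L Tplus) = (T ∘L Tplus) ∘L C₂ →
      (Θ C) ∘L (Tplus ∘L T) = (Tplus ∘L T) ∘L (Θ C) ∧
      Θ (C₁ + C₂) = Θ C₁ + Θ C₂ ∧
      (∀ a : ℂ, Θ (a • C) = a • Θ C) ∧
      Θ (C₁ ∘L C₂) = Θ C₁ ∘L Θ C₂ ∧
      Θ (Ginv ∘L (adjoint C ∘L G)) = adjoint (Θ C) ∧
      Θ 1 = 1 ∧
      Θ (T ∘L Tplus) = Tplus ∘L T ∧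
      (Θ C = 0 ↔ ∀ x : K, Tplus (C x) = 0) := by
  have key : ∀ C : K →L[ℂ] K, C ∘L (T ∘L Tplus) = (T ∘L Tplus) ∘L C →
      ∀ u, T (Θ C u) = C (T u) := by
    intro C hC u
    have h : (u, Θ C u) ∈ Prod.map ⇑T ⇑T ⁻¹' {p : K × K | p.2 = C p.1} := by
      rw [hΘ C hC]
      rfl
    exact h
  have key2 : ∀ C : K →L[ℂ] K, C ∘L (T ∘L Tplus) = (T ∘L Tplus) ∘L C →
      Θ C ∘L Tplus = Tplus ∘L C := by
    intro C hC
    ext x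
    apply hT
    rw [comp_apply, key C hC]
    exact congr($hC x)
  intro C C₁ C₂ hC hC₁ hC₂
  have e : ∀ x, C (T (Tplus x)) = T (Tplus (C x)) := fun x => congr($hC x)
  have e₁ : ∀ x, C₁ (T (Tplus x)) = T (Tplus (C₁ x)) := fun x => congr($hC₁ x)
  have e₂ : ∀ x, C₂ (T (Tplus x)) = T (Tplus (C₂ x)) := fun x => congr($hC₂ x)
  refine ⟨?_, ?_, ?_, ?_, ?_, ?_, ?_, ?_⟩
  · ext u
    apply hT
    simp [key C hC, e]
  · ext u
    apply hT
    rw [key _ (by ext x; simp [e₁, e₂])]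
    simp [key C₁ hC₁, key C₂ hC₂]
  · intro a
    ext u
    apply hT
    rw [key _ (by ext x; simp [e])]
    simp [key C hC]
  · ext u
    apply hT
    rw [key _ (by ext x; simp [e₁, e₂])]
    simp [key C₁ hC₁, key C₂ hC₂]
  · have g1 : ∀ x, G (Ginv x) = x := fun x => congr($hG1 x)
    have g2 : ∀ x, Ginv (G x) = x := fun x => congr($hG2 x)
    have hGa : adjoint G = G := hG.adjoint_eq
    -- The adjoint of `C T T* G = T T* G C`.
    have ha : ∀ x, G (T (adjoint T (adjoint C x))) = adjoint C (G (T (adjoint T x))) := by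
      have h := congr(adjoint $hC)
      simp only [hTplus, adjoint_comp, adjoint_adjoint, hGa] at h
      exact fun x => congr($h x)
    have hCp : (Ginv ∘L (adjoint C ∘L G)) ∘L (T ∘L Tplus)
        = (T ∘L Tplus) ∘L (Ginv ∘L (adjoint C ∘L G)) := by
      ext x
      simp [hTplus, ← ha, g1, g2]
    have h1 := key2 _ hCp
    have h2 : adjoint (Θ C) ∘L adjoint T = adjoint T ∘L adjoint C := by
      rw [← adjoint_comp, ← adjoint_comp]
      congr 1
      ext u
      exact key C hC u
    apply eq_of_comp_adjoint_comp hG1 hT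
    rw [← hTplus, h1]
    ext x
    simpa [hTplus, g1] using congr($h2 (G x)).symm
  · ext u
    apply hT
    rw [key 1 (by ext x; simp)]
    simp
  · ext u
    apply hT
    rw [key _ rfl]
    simp
  · have h := key2 C hC
    constructor
    · intro h0 x
      have hx : Θ C (Tplus x) = Tplus (C x) := congr($h x)
      rw [← hx, h0, zero_apply]
    · intro h0
      apply eq_of_comp_adjoint_comp hG1 hT
      rw [← hTplus, h]
      ext x
      simp [h0]
end

section
/- Let (K, ⟨·,·⟩, G) be a Krein space, (V, ⟨·,·⟩) a complex Hilbert space, and T : V → K a bounded injective linear operator with Krein adjoint T⁺ = T*G. Define Ξ(D) := T D T⁺ for bounded operators D on V. Then for all D, D₁, D₂ ∈ B(V) commuting with T⁺T and all C ∈ B(K) commuting with TT⁺ (with Θ(C) ∈ B(V) denoting the unique bounded operator satisfying Θ(C)T⁺ = T⁺C): (a) Ξ(D) commutes with TT⁺; (b) Ξ(D*) = Ξ(D)⁺ where Ξ(D)⁺ := G⁻¹Ξ(D)*G; (c) Ξ(D·Θ(C)) = Ξ(D)·C and Ξ(Θ(C)·D) = C·Ξ(D); (d) Ξ(D₁D₂T⁺T)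 = Ξ(D₁)Ξ(D₂); (e) Ξ(Θ(C)) = TT⁺C = C·TT⁺; (f) if D commutes with every bounded operator on V that commutes with T⁺T, then Ξ(D) commutes with every bounded operator on K that commutes with TT⁺. -/
/-!
Since `T` is injective and `G` is invertible, `T⁺ = T*G` has dense range. Hence
`TΘ(C)T⁺ = TT⁺C = CTT⁺` upgrades to `TΘ(C) = CT`, and every clause except
the last follows from associativity, the commutation hypotheses and `(TDT*G)* = GTD*T*`.

For the last clause (bicommutants), given `F` commuting with `TT⁺`, the operator `Θ(F)` has to be constructed, i.e. `T⁺x ↦ T⁺Fx`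
must be shown to be bounded. With respect to the semi-inner product `⟨T⁺x, T⁺y⟩` on `K` the operator
`F` has the bounded formal adjoint `F⁺ = G⁻¹F*G`. A theorem of Krein and Lax then says that `F` is
bounded for the corresponding seminorm (`exists_norm_comp_le`): `R = F⁺F` is symmetric for this form,
and iterating Cauchy-Schwarz along `R ^ (2 ^ n)` bounds `R` in the seminorm in terms of its operator norm.
Then `Θ(F)` commutes with `T⁺T`, hence with `D`, and
`TDT⁺F = TDΘ(F)T⁺ = TΘ(F)DT⁺ = FTDT⁺`.
-/

open ContinuousLinearMap

/-- The constant `M / p` disappears on taking `2 ^ n`-th roots and letting `n → ∞`. -/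
lemma le_of_pow_two_pow_mul_le {a p q M : ℝ} (hp : 0 < p) (hq : 0 < q)
    (h : ∀ n : ℕ, a ^ (2 ^ n) * p ≤ q ^ (2 ^ n) * M) : a ≤ q := by
  by_contra! hlt
  have h1 : 1 < a / q := (one_lt_div hq).2 hlt
  obtain ⟨n, hn⟩ := pow_unbounded_of_one_lt (M / p) h1
  have h2 : (a / q) ^ n ≤ (a / q) ^ (2 ^ n) :=
    pow_le_pow_right₀ h1.le Nat.lt_two_pow_self.le
  have h3 : (a / q) ^ (2 ^ n) ≤ M / p := by
    rw [div_pow, div_le_div_iff₀ (by positivity) hp]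
    linarith [h n]
  linarith

/-- An operator `R` which is symmetric for the semi-inner product `⟨Wx, Wy⟩` is bounded for the
seminorm `‖Wx‖`. The constant is `‖R‖ + 1` rather than the optimal `‖R‖` so that it is positive. -/
lemma norm_comp_le_of_symm {K V : Type*}
    [NormedAddCommGroup K] [InnerProductSpace ℂ K]
    [NormedAddCommGroup V] [InnerProductSpace ℂ V]
    (W : K →L[ℂ] V) (R : K →L[ℂ] K)
    (h : ∀ x y, inner ℂ (W (R x)) (W y) = inner ℂ (W x) (W (R y))) (x : K) :
    ‖W (R x)‖ ≤ (‖R‖ + 1) * ‖W x‖ := by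
  have hpow : ∀ n : ℕ, ∀ x y,
      inner ℂ (W ((R ^ n) x)) (W y) = inner ℂ (W x) (W ((R ^ n) y)) := by
    intro n
    induction n with
    | zero => intro x y; simp
    | succ n ih =>
      intro x y
      have e1 : (R ^ (n + 1)) x = (R ^ n) (R x) := by rw [pow_succ]; rfl
      have e2 : (R ^ (n + 1)) y = R ((R ^ n) y) := by rw [pow_succ']; rfl
      rw [e1, e2, ih, h]
  have hsq : ∀ n : ℕ, ‖W ((R ^ n) x)‖ ^ 2 ≤ ‖W x‖ * ‖W ((R ^ (2 * n)) x)‖ := by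
    intro n
    have e : (R ^ (2 * n)) x = (R ^ n) ((R ^ n) x) := by rw [two_mul, pow_add]; rfl
    rw [e]
    calc ‖W ((R ^ n) x)‖ ^ 2
        = ‖inner ℂ (W ((R ^ n) x)) (W ((R ^ n) x))‖ := by
          rw [inner_self_eq_norm_sq_to_K]; simp
      _ = ‖inner ℂ (W x) (W ((R ^ n) ((R ^ n) x)))‖ := by rw [hpow]
      _ ≤ _ := norm_inner_le_norm _ _
  rcases (norm_nonneg (W x)).eq_or_lt with hp | hp
  · have h1 := hsq 1
    rw [← hp, zero_mul, pow_one] at h1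
    have h2 : ‖W (R x)‖ = 0 := by
      have := sq_nonneg ‖W (R x)‖
      exact pow_eq_zero_iff two_ne_zero |>.1 (le_antisymm h1 this)
    rw [h2, ← hp, mul_zero]
  have hit : ∀ n : ℕ, ‖W (R x)‖ ^ (2 ^ n) * ‖W x‖ ≤ ‖W x‖ ^ (2 ^ n) * ‖W ((R ^ (2 ^ n)) x)‖ := by
    intro n
    induction n with
    | zero => simp [mul_comm]
    | succ n ih =>
      have h1 := hsq (2 ^ n)
      rw [← pow_succ'] at h1
      have h2 := pow_le_pow_left₀ (by positivity) ih 2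
      refine le_of_mul_le_mul_right ?_ hp
      calc ‖W (R x)‖ ^ (2 ^ (n + 1)) * ‖W x‖ * ‖W x‖
          = (‖W (R x)‖ ^ (2 ^ n) * ‖W x‖) ^ 2 := by rw [pow_succ 2 n, pow_mul]; ring
        _ ≤ (‖W x‖ ^ (2 ^ n) * ‖W ((R ^ (2 ^ n)) x)‖) ^ 2 := h2
        _ = ‖W x‖ ^ (2 ^ (n + 1)) * ‖W ((R ^ (2 ^ n)) x)‖ ^ 2 := by
          rw [pow_succ 2 n, pow_mul]; ring
        _ ≤ ‖W x‖ ^ (2 ^ (n + 1)) * (‖W x‖ * ‖W ((R ^ (2 ^ (n + 1))) x)‖) := by gcongr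
        _ = _ := by ring
  refine le_of_pow_two_pow_mul_le (M := ‖W‖ * ‖x‖) hp (by positivity) fun n => ?_
  have hR : ‖W ((R ^ (2 ^ n)) x)‖ ≤ ‖W‖ * ((‖R‖ + 1) ^ (2 ^ n) * ‖x‖) := by
    have h1 : ‖R ^ (2 ^ n)‖ ≤ (‖R‖ + 1) ^ (2 ^ n) :=
      (norm_pow_le' R (by positivity)).trans
        (pow_le_pow_left₀ (norm_nonneg _) (by linarith) _)
    calc ‖W ((R ^ (2 ^ n)) x)‖ ≤ ‖W‖ * ‖(R ^ (2 ^ n)) x‖ := W.le_opNorm _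
      _ ≤ ‖W‖ * (‖R ^ (2 ^ n)‖ * ‖x‖) := by gcongr; exact le_opNorm _ _
      _ ≤ _ := by gcongr
  calc _ ≤ _ := hit n
    _ ≤ ‖W x‖ ^ (2 ^ n) * (‖W‖ * ((‖R‖ + 1) ^ (2 ^ n) * ‖x‖)) := by gcongr
    _ = _ := by rw [mul_pow]; ring

/-- Krein-Lax: an operator `F` possessing a bounded formal adjoint `H` for the semi-inner product
`⟨Wx, Wy⟩` is bounded for the seminorm `‖Wx‖`. -/
lemma exists_norm_comp_le {K V : Type*}
    [NormedAddCommGroup K] [InnerProductSpace ℂ K]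
    [NormedAddCommGroup V] [InnerProductSpace ℂ V]
    (W : K →L[ℂ] V) (F H : K →L[ℂ] K)
    (h : ∀ x y, inner ℂ (W (F x)) (W y) = inner ℂ (W x) (W (H y))) :
    ∃ c : ℝ, ∀ x, ‖W (F x)‖ ≤ c * ‖W x‖ := by
  have hsymm : ∀ x y, inner ℂ (W ((H ∘L F) x)) (W y) = inner ℂ (W x) (W ((H ∘L F) y)) := by
    intro x y
    simp only [comp_apply]
    rw [← h, ← inner_conj_symm, ← h, inner_conj_symm]
  refine ⟨‖H ∘L F‖ + 1, fun x => ?_⟩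
  have h1 := norm_comp_le_of_symm W (H ∘L F) hsymm x
  have h2 : ‖W (F x)‖ ^ 2 ≤ ‖W x‖ * ‖W ((H ∘L F) x)‖ := by
    calc ‖W (F x)‖ ^ 2 = ‖inner ℂ (W (F x)) (W (F x))‖ := by
          rw [inner_self_eq_norm_sq_to_K]; simp
      _ = ‖inner ℂ (W x) (W ((H ∘L F) x))‖ := by rw [h]; rfl
      _ ≤ _ := norm_inner_le_norm _ _
  have hc : 1 ≤ ‖H ∘L F‖ + 1 := by linarith [norm_nonneg (H ∘L F)]
  refine (pow_le_pow_iff_left₀ (norm_nonneg _) (by positivity) two_ne_zero).1 ?_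
  calc _ ≤ _ := h2
    _ ≤ ‖W x‖ * ((‖H ∘L F‖ + 1) * ‖W x‖) := by gcongr
    _ = (‖H ∘L F‖ + 1) * ‖W x‖ ^ 2 := by ring
    _ ≤ (‖H ∘L F‖ + 1) ^ 2 * ‖W x‖ ^ 2 := by gcongr; nlinarith
    _ = _ := by ring

theorem stmt17 {K V : Type*}
    [NormedAddCommGroup K] [InnerProductSpace ℂ K] [CompleteSpace K]
    [NormedAddCommGroup V] [InnerProductSpace ℂ V] [CompleteSpace V]
    (G Ginv : K →L[ℂ] K) (hG : IsSelfAdjoint G)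
    (hG1 : G ∘L Ginv = 1) (hG2 : Ginv ∘L G = 1)
    (T : V →L[ℂ] K) (hT : Function.Injective T)
    (Tplus : K →L[ℂ] V) (hTplus : Tplus = adjoint T ∘L G) :
    ∀ C : K →L[ℂ] K, C ∘L (T ∘L Tplus) = (T ∘L Tplus) ∘L C →
    ∀ ThC : V →L[ℂ] V, ThC ∘L Tplus = Tplus ∘L C →
    ∀ D D₁ D₂ : V →L[ℂ] V,
      D ∘L (Tplus ∘L T) = (Tplus ∘L T) ∘L D →
      D₁ ∘L (Tplus ∘L T) = (Tplus ∘L T) ∘L D₁ →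
      D₂ ∘L (Tplus ∘L T) = (Tplus ∘L T) ∘L D₂ →
      ((T ∘L D ∘L Tplus) ∘L (T ∘L Tplus) = (T ∘L Tplus) ∘L (T ∘L D ∘L Tplus)) ∧
      (T ∘L adjoint D ∘L Tplus = Ginv ∘L (adjoint (T ∘L D ∘L Tplus) ∘L G)) ∧
      (T ∘L (D ∘L ThC) ∘L Tplus = (T ∘L D ∘L Tplus) ∘L C) ∧
      (T ∘L (ThC ∘L D) ∘L Tplus = C ∘L (T ∘L D ∘L Tplus)) ∧
      (T ∘L (D₁ ∘L D₂ ∘L (Tplus ∘L T)) ∘L Tplus = (T ∘L D₁ ∘L Tplus) ∘L (T ∘L D₂ ∘L Tplus)) ∧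
      (T ∘L ThC ∘L Tplus = (T ∘L Tplus) ∘L C ∧
        (T ∘L Tplus) ∘L C = C ∘L (T ∘L Tplus)) ∧
      ((∀ E : V →L[ℂ] V, E ∘L (Tplus ∘L T) = (Tplus ∘L T) ∘L E → D ∘L E = E ∘L D) →
        ∀ F : K →L[ℂ] K, F ∘L (T ∘L Tplus) = (T ∘L Tplus) ∘L F →
          (T ∘L D ∘L Tplus) ∘L F = F ∘L (T ∘L D ∘L Tplus)) := by
  have hGG : ∀ x, G (Ginv x) = x := fun x => DFunLike.congr_fun hG1 x
  have hGiG : ∀ x, Ginv (G x) = x := fun x => DFunLike.congr_fun hG2 x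
  have hTp : ∀ x, Tplus x = adjoint T (G x) := fun x => by rw [hTplus]; rfl
  have hTdense : DenseRange (adjoint T) := by
    have h1 : (adjoint T).rangeᗮ = ⊥ := by
      rw [orthogonal_range, adjoint_adjoint, LinearMap.ker_eq_bot]
      exact hT
    have h2 := Submodule.topologicalClosure_eq_top_iff.2 h1
    have h3 := Submodule.dense_iff_topologicalClosure_eq_top.2 h2
    rwa [LinearMap.coe_range] at h3
  have hdense : DenseRange Tplus := by
    have hr : Set.range Tplus = Set.range (adjoint T) := by
      ext v
      constructor
      · rintro ⟨x, rfl⟩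
        exact ⟨G x, (hTp x).symm⟩
      · rintro ⟨x, rfl⟩
        exact ⟨Ginv x, by rw [hTp, hGG]⟩
    rw [DenseRange, hr]
    exact hTdense
  -- `TΘ(C) = CT`, because both sides agree on the dense range of `T⁺`.
  have key : ∀ (C : K →L[ℂ] K) (E : V →L[ℂ] V), C ∘L (T ∘L Tplus) = (T ∘L Tplus) ∘L C →
      E ∘L Tplus = Tplus ∘L C → ∀ v, T (E v) = C (T v) := by
    intro C E hC hE v
    refine congrFun (hdense.equalizer (g := fun v => T (E v)) (h := fun v => C (T v))
      (by fun_prop) (by fun_prop) ?_) v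
    funext x
    have h1 : E (Tplus x) = Tplus (C x) := DFunLike.congr_fun hE x
    have h2 : C (T (Tplus x)) = T (Tplus (C x)) := DFunLike.congr_fun hC x
    simp only [Function.comp_apply]
    rw [h1, h2]
  -- Existence of `Θ(F)`; the formal adjoint of `F` for `⟨T⁺x, T⁺y⟩` is `F⁺ = G⁻¹F*G`.
  have exTheta : ∀ F : K →L[ℂ] K, F ∘L (T ∘L Tplus) = (T ∘L Tplus) ∘L F →
      ∃ E : V →L[ℂ] V, E ∘L Tplus = Tplus ∘L F := by
    intro F hF
    have hFa : ∀ x, F (T (Tplus x)) = T (Tplus (F x)) := DFunLike.congr_fun hF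
    have hform : ∀ x y, inner ℂ (Tplus x) (Tplus y) = inner ℂ (T (Tplus x)) (G y) := by
      intro x y
      rw [hTp y, adjoint_inner_right]
    have hb := exists_norm_comp_le Tplus F (Ginv ∘L (adjoint F ∘L G)) (by
      intro x y
      rw [hform, hform, ← hFa]
      simp only [comp_apply]
      rw [hGG, adjoint_inner_right])
    refine ⟨(Tplus ∘L F).toLinearMap.extendOfNorm Tplus.toLinearMap, ?_⟩
    ext x
    exact LinearMap.extendOfNorm_eq (f := (Tplus ∘L F).toLinearMap) (e := Tplus.toLinearMap)
      hdense hb x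
  intro C hC ThC hThC D D₁ D₂ hD hD₁ hD₂
  have hCa : ∀ x, C (T (Tplus x)) = T (Tplus (C x)) := DFunLike.congr_fun hC
  have hTha : ∀ x, ThC (Tplus x) = Tplus (C x) := DFunLike.congr_fun hThC
  have hDa : ∀ x, D (Tplus (T x)) = Tplus (T (D x)) := DFunLike.congr_fun hD
  have hD₂a : ∀ x, D₂ (Tplus (T x)) = Tplus (T (D₂ x)) := DFunLike.congr_fun hD₂
  refine ⟨?_, ?_, ?_, ?_, ?_, ⟨?_, hC.symm⟩, ?_⟩
  · ext x
    simp only [comp_apply]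
    rw [hDa]
  · have hadj : adjoint (T ∘L D ∘L Tplus) = G ∘L (T ∘L adjoint D ∘L adjoint T) := by
      rw [hTplus]
      simp only [adjoint_comp, adjoint_adjoint, hG.adjoint_eq, comp_assoc]
    rw [hadj]
    ext x
    simp only [comp_apply]
    rw [hGiG, hTp]
  · ext x
    simp only [comp_apply]
    rw [hTha]
  · ext x
    simp only [comp_apply]
    rw [key C ThC hC hThC]
  · ext x
    simp only [comp_apply]
    rw [hD₂a]
  · ext x
    simp only [comp_apply]
    rw [hTha]
  · intro hcomm F hF
    obtain ⟨E, hE⟩ := exTheta F hF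
    have hEa : ∀ x, E (Tplus x) = Tplus (F x) := DFunLike.congr_fun hE
    have hTE := key F E hF hE
    have hDE : ∀ v, D (E v) = E (D v) := DFunLike.congr_fun (hcomm E (by
      ext v
      simp only [comp_apply]
      rw [hEa, hTE]))
    ext x
    simp only [comp_apply]
    rw [← hEa, hDE, hTE]
end
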